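/- Equality in ℳ is decidable: for all morphism terms g₁, g₂ in ℳ, g₁ = g₂ is derivable from the 𝒦_{Φ,Ψ}-equations if and only if D(CF(g₁)) ≡ D(CF(g₂)), where CF(g) is the unique CF normal form of g and D(h) the unique D normal form of h. -/

import Mathlib

open CategoryTheory

universe u v

namespace GDin

/-! ### Graphs in the sense of the paper -/

/-- Vertices of a graph with `m` left-hand argument places, `n` right-hand argument
places and `g` auxiliary `G`-vertices. -/
abbrev Vtx (m n g : ℕ) := (Fin m ⊕ Fin n) ⊕ Fin g

/-- The "same component" relation generated by a set of edges. -/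
def Conn {V : Type*} (E : V → V → Prop) : V → V → Prop := Relation.EqvGen E

/-- A graph in the sense of the paper.  The sign (variance) functions `sL` (for the
left-hand argument places `x₁,…,x_m`) and `sR` (for the right-hand argument places
`y₁,…,y_n`) are parameters; `true` means positive (covariant), `false` negative.
The structure also carries the number `k` of connected components together with the
component classifier `π`. -/
structure GGraph (m n g : ℕ) (sL : Fin m → Bool) (sR : Fin n → Bool) : Type where
  edge : Vtx m n g → Vtx m n g → Prop
  symm : ∀ u v, edge u v → edge v u
  /-- condition 1: every vertex belongs to some edge -/
  covered : ∀ v, ∃ w, edge v w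
  /-- condition 2: an edge joins two left-hand argument places iff they have opposite
  signs and lie in the same component -/
  condX : ∀ i j : Fin m, edge (.inl (.inl i)) (.inl (.inl j)) ↔
    (sL i = !sL j ∧ Conn edge (.inl (.inl i)) (.inl (.inl j)))
  /-- condition 3 -/
  condY : ∀ i j : Fin n, edge (.inl (.inr i)) (.inl (.inr j)) ↔
    (sR i = !sR j ∧ Conn edge (.inl (.inr i)) (.inl (.inr j)))
  /-- condition 4 -/
  condXY : ∀ (i : Fin m) (j : Fin n), edge (.inl (.inl i)) (.inl (.inr j)) ↔
    (sL i = sR j ∧ Conn edge (.inl (.inl i)) (.inl (.inr j)))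
  /-- condition 5, first half: if a component contains an edge between two argument
  places then it contains no `G`-vertex -/
  condG₁ : ∀ v : Vtx m n g,
    (∃ u w : Fin m ⊕ Fin n, Conn edge (.inl u) v ∧ edge (.inl u) (.inl w)) →
      ∀ a : Fin g, ¬ Conn edge (.inr a) v
  /-- condition 5, second half: otherwise the component contains exactly one
  `G`-vertex -/
  condG₂ : ∀ v : Vtx m n g,
    (¬ ∃ u w : Fin m ⊕ Fin n, Conn edge (.inl u) v ∧ edge (.inl u) (.inl w)) →
      ∃! a : Fin g, Conn edge (.inr a) v
  /-- condition 5: every other vertex of such a component is joined to the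
  `G`-vertex by an edge -/
  condG₃ : ∀ (a : Fin g) (u : Fin m ⊕ Fin n),
    Conn edge (.inl u) (.inr a) → edge (.inl u) (.inr a)
  /-- the number of components -/
  k : ℕ
  /-- the component classifier -/
  π : Vtx m n g → Fin k
  π_surj : Function.Surjective π
  π_eq : ∀ u v, π u = π v ↔ Conn edge u v

namespace GGraph

variable {m n g : ℕ} {sL : Fin m → Bool} {sR : Fin n → Bool}

/-- component of the `i`-th left-hand argument place -/
def πL (Γ : GGraph m n g sL sR) (i : Fin m) : Fin Γ.k := Γ.π (.inl (.inl i))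

/-- component of the `j`-th right-hand argument place -/
def πR (Γ : GGraph m n g sL sR) (j : Fin n) : Fin Γ.k := Γ.π (.inl (.inr j))

end GGraph

/-! ### Variance-indexed categories and g-dinaturality -/

/-- `B` or `Bᵒᵖ` according to a variance. -/
def VarCat (B : Type u) [Category.{v} B] : Bool → Type u
  | true => B
  | false => Bᵒᵖ

instance (B : Type u) [Category.{v} B] : ∀ b, Category.{v} (VarCat B b)
  | true => (inferInstance : Category B)
  | false => (inferInstance : Category Bᵒᵖ)

variable {B : Type u} [Category.{v} B]

/-- The object of `B` or `Bᵒᵖ` with `P` at a positive argument place and `N` at a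
negative one. -/
def pairObj : (b : Bool) → B → B → VarCat B b
  | true, P, _ => P
  | false, _, N => Opposite.op N

/-- The morphism with `u` at a positive argument place and `v` (contravariantly) at a
negative one. -/
def pairHom : (b : Bool) → {P P' N N' : B} → (P ⟶ P') → (N' ⟶ N) →
    (pairObj b P N ⟶ pairObj b P' N')
  | true, _, _, _, _, u, _ => u
  | false, _, _, _, _, _, v => v.op

variable {ι : Type} {k : ℕ}

/-- The tuple of objects `⟨u,v⟩` with `u` in all positive and `v` in all negative
argument places. -/
@[reducible] def tupObj (s : ι → Bool) (P N : B) : ∀ i, VarCat B (s i) :=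
  fun i => pairObj (s i) P N

/-- The corresponding tuple of morphisms. -/
def tupHom (s : ι → Bool) {P P' N N' : B} (u : P ⟶ P') (v : N' ⟶ N) :
    (tupObj s P N ⟶ tupObj s P' N') :=
  fun i => pairHom (s i) u v

/-- The diagonal-like tuple of objects determined by an assignment of objects to
the components of a graph. -/
@[reducible] def diagObj (s : ι → Bool) (pl : ι → Fin k) (A : Fin k → B) :
    ∀ i, VarCat B (s i) :=
  fun i => pairObj (s i) (A (pl i)) (A (pl i))

/-- The tuple of objects obtained from the component assignment `A` by replacing the
value of component `c` by `P` at positive and `N` at negative argument places. -/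
def hexObj (s : ι → Bool) (pl : ι → Fin k) (c : Fin k) (A : Fin k → B) (P N : B) :
    ∀ i, VarCat B (s i) :=
  fun i => if pl i = c then pairObj (s i) P N else pairObj (s i) (A (pl i)) (A (pl i))

/-- The corresponding tuple of morphisms (identities outside component `c`). -/
def hexHom (s : ι → Bool) (pl : ι → Fin k) (c : Fin k) (A : Fin k → B)
    {P P' N N' : B} (u : P ⟶ P') (v : N' ⟶ N) :
    (hexObj s pl c A P N ⟶ hexObj s pl c A P' N') :=
  fun i => by
    unfold hexObj
    by_cases h : pl i = c
    · simp only [if_pos h]; exact pairHom (s i) u v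
    · simp only [if_neg h]; exact 𝟙 _

/-- update of a component assignment -/
def updF {γ : Type*} (A : Fin k → γ) (c : Fin k) (X : γ) : Fin k → γ :=
  fun j => if j = c then X else A j

theorem diag_upd (s : ι → Bool) (pl : ι → Fin k) (c : Fin k) (A : Fin k → B) (X : B) :
    diagObj s pl (updF A c X) = hexObj s pl c A X X := by
  funext i
  unfold diagObj hexObj updF
  by_cases h : pl i = c <;> simp [h]

/-- g-dinaturality of a transformation with respect to a graph: in every component
and for every morphism `f : P ⟶ Q` (all other components being kept fixed), the
g-dinaturality hexagon commutes. -/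
def IsGDin {m n gΓ : ℕ} {sL : Fin m → Bool} {sR : Fin n → Bool}
    (Γ : GGraph m n gΓ sL sR)
    (T : (∀ i : Fin m, VarCat B (sL i)) ⥤ B)
    (S : (∀ j : Fin n, VarCat B (sR j)) ⥤ B)
    (α : ∀ A : Fin Γ.k → B, T.obj (diagObj sL Γ.πL A) ⟶ S.obj (diagObj sR Γ.πR A)) :
    Prop :=
  ∀ (c : Fin Γ.k) (A : Fin Γ.k → B) (P Q : B) (f : P ⟶ Q),
    T.map (hexHom sL Γ.πL c A f (𝟙 Q)) ≫
      eqToHom (congrArg T.obj (diag_upd sL Γ.πL c A Q).symm) ≫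
      α (updF A c Q) ≫
      eqToHom (congrArg S.obj (diag_upd sR Γ.πR c A Q)) ≫
      S.map (hexHom sR Γ.πR c A (𝟙 Q) f)
    = T.map (hexHom sL Γ.πL c A (𝟙 P) f) ≫
      eqToHom (congrArg T.obj (diag_upd sL Γ.πL c A P).symm) ≫
      α (updF A c P) ≫
      eqToHom (congrArg S.obj (diag_upd sR Γ.πR c A P)) ≫
      S.map (hexHom sR Γ.πR c A f (𝟙 P))

/-- The g-dinaturality hexagon for a transformation whose graph has a single
component (so that only the signs of the argument places matter). -/
def SingleHex {ιx ιz : Type} (sx : ιx → Bool) (sz : ιz → Bool)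
    (F : (∀ i : ιx, VarCat B (sx i)) ⥤ B) (H : (∀ l : ιz, VarCat B (sz l)) ⥤ B)
    (φ : ∀ A : B, F.obj (tupObj sx A A) ⟶ H.obj (tupObj sz A A)) : Prop :=
  ∀ (P Q : B) (f : P ⟶ Q),
    F.map (tupHom sx f (𝟙 Q)) ≫ φ Q ≫ H.map (tupHom sz (𝟙 Q) f)
    = F.map (tupHom sx (𝟙 P) f) ≫ φ P ≫ H.map (tupHom sz f (𝟙 P))


/-! ### The free category `𝒟` of the equational class `𝒦_{Φ,Ψ}` -/

/-- Objects of `𝒟`: freely generated over `{A, C}` by an `m`-ary operation `T`,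
an `n`-ary operation `S` and a `p`-ary operation `R`. -/
inductive DObj (m n p : ℕ) : Type
  | A : DObj m n p
  | C : DObj m n p
  | T : (Fin m → DObj m n p) → DObj m n p
  | S : (Fin n → DObj m n p) → DObj m n p
  | R : (Fin p → DObj m n p) → DObj m n p

/-- source of a functor argument according to its variance -/
abbrev dSrc {γ : Type*} (b : Bool) (X Y : γ) : γ := cond b X Y
/-- target of a functor argument according to its variance -/
abbrev dTgt {γ : Type*} (b : Bool) (X Y : γ) : γ := cond b Y X

section DD

variable {m n p gΦ gΨ : ℕ} {sx : Fin m → Bool} {sy : Fin n → Bool} {sz : Fin p → Bool}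

/-- Morphism terms of the category `𝒟`, generated from `f : A → C`, the identities,
the generic g-dinatural transformations `α`, `β` and the operations `T`, `S`, `R`
(contravariant in their negative argument places). -/
inductive DTerm (Φ : GGraph m n gΦ sx sy) (Ψ : GGraph n p gΨ sy sz) :
    DObj m n p → DObj m n p → Type
  | f : DTerm Φ Ψ .A .C
  | id (X : DObj m n p) : DTerm Φ Ψ X X
  /-- composition, written in diagrammatic order -/
  | comp {X Y Z} : DTerm Φ Ψ X Y → DTerm Φ Ψ Y Z → DTerm Φ Ψ X Z
  | alpha (W : Fin Φ.k → DObj m n p) :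
      DTerm Φ Ψ (.T fun i => W (Φ.πL i)) (.S fun j => W (Φ.πR j))
  | beta (W : Fin Ψ.k → DObj m n p) :
      DTerm Φ Ψ (.S fun j => W (Ψ.πL j)) (.R fun l => W (Ψ.πR l))
  | mapT {X Y : Fin m → DObj m n p} :
      (∀ i, DTerm Φ Ψ (dSrc (sx i) (X i) (Y i)) (dTgt (sx i) (X i) (Y i))) →
      DTerm Φ Ψ (.T X) (.T Y)
  | mapS {X Y : Fin n → DObj m n p} :
      (∀ j, DTerm Φ Ψ (dSrc (sy j) (X j) (Y j)) (dTgt (sy j) (X j) (Y j))) →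
      DTerm Φ Ψ (.S X) (.S Y)
  | mapR {X Y : Fin p → DObj m n p} :
      (∀ l, DTerm Φ Ψ (dSrc (sz l) (X l) (Y l)) (dTgt (sz l) (X l) (Y l))) →
      DTerm Φ Ψ (.R X) (.R Y)

variable {Φ : GGraph m n gΦ sx sy} {Ψ : GGraph n p gΨ sy sz}

/-- composition of functor arguments, respecting variance -/
def dComp {X Y Z : DObj m n p} : (b : Bool) →
    DTerm Φ Ψ (dSrc b X Y) (dTgt b X Y) → DTerm Φ Ψ (dSrc b Y Z) (dTgt b Y Z) →
    DTerm Φ Ψ (dSrc b X Z) (dTgt b X Z)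
  | true, g, h => .comp g h
  | false, g, h => .comp h g

/-- identity as a functor argument -/
def dId (X : DObj m n p) : (b : Bool) → DTerm Φ Ψ (dSrc b X X) (dTgt b X X)
  | true => .id X
  | false => .id X

/-- the object tuple with `P` at the positive and `N` at the negative argument
places of component `i`, and the parameter `Z` elsewhere -/
def mixT {q k : ℕ} (pl : Fin q → Fin k) (s : Fin q → Bool) (i : Fin k)
    (Z : Fin k → DObj m n p) (P N : DObj m n p) : Fin q → DObj m n p :=
  fun j => if pl j = i then (cond (s j) P N) else Z (pl j)

section vecs
variable {q k : ℕ} (pl : Fin q → Fin k) (s : Fin q → Bool) (i : Fin k)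
  (Z : Fin k → DObj m n p) {X Y : DObj m n p} (t : DTerm Φ Ψ X Y)

/-- the argument vector `g` of the equation (α) (left-hand side, source functor):
`t` at the positive and `1_Y` at the negative argument places of component `i`,
identities elsewhere -/
def vecA : ∀ j, DTerm Φ Ψ (dSrc (s j) (mixT pl s i Z X Y j) (updF Z i Y (pl j)))
    (dTgt (s j) (mixT pl s i Z X Y j) (updF Z i Y (pl j))) := fun j => by
  unfold mixT updF
  by_cases h : pl j = i
  · simp only [if_pos h]
    cases hs : s j
    · exact .id Y
    · exact t
  · simp only [if_neg h]
    exact dId (Z (pl j)) (s j)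

/-- the argument vector `h` of the equation (α) (left-hand side, target functor) -/
def vecB : ∀ j, DTerm Φ Ψ (dSrc (s j) (updF Z i Y (pl j)) (mixT pl s i Z Y X j))
    (dTgt (s j) (updF Z i Y (pl j)) (mixT pl s i Z Y X j)) := fun j => by
  unfold mixT updF
  by_cases h : pl j = i
  · simp only [if_pos h]
    cases hs : s j
    · exact t
    · exact .id Y
  · simp only [if_neg h]
    exact dId (Z (pl j)) (s j)

/-- the argument vector `g'` of the equation (α) (right-hand side, source functor) -/
def vecC : ∀ j, DTerm Φ Ψ (dSrc (s j) (mixT pl s i Z X Y j) (updF Z i X (pl j)))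
    (dTgt (s j) (mixT pl s i Z X Y j) (updF Z i X (pl j))) := fun j => by
  unfold mixT updF
  by_cases h : pl j = i
  · simp only [if_pos h]
    cases hs : s j
    · exact t
    · exact .id X
  · simp only [if_neg h]
    exact dId (Z (pl j)) (s j)

/-- the argument vector `h'` of the equation (α) (right-hand side, target functor) -/
def vecD : ∀ j, DTerm Φ Ψ (dSrc (s j) (updF Z i X (pl j)) (mixT pl s i Z Y X j))
    (dTgt (s j) (updF Z i X (pl j)) (mixT pl s i Z Y X j)) := fun j => by
  unfold mixT updF
  by_cases h : pl j = i
  · simp only [if_pos h]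
    cases hs : s j
    · exact .id X
    · exact t
  · simp only [if_neg h]
    exact dId (Z (pl j)) (s j)

end vecs

/-- Equality of morphism terms of `𝒟`: the congruence generated by the
`𝒦_{Φ,Ψ}`-equations (categorial, functorial and g-dinatural equations). -/
inductive DEq : ∀ {X Y : DObj m n p}, DTerm Φ Ψ X Y → DTerm Φ Ψ X Y → Prop
  | refl {X Y} (g : DTerm Φ Ψ X Y) : DEq g g
  | symm {X Y} {g h : DTerm Φ Ψ X Y} : DEq g h → DEq h g
  | trans {X Y} {g h t : DTerm Φ Ψ X Y} : DEq g h → DEq h t → DEq g t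
  | comp_congr {X Y Z} {g g' : DTerm Φ Ψ X Y} {h h' : DTerm Φ Ψ Y Z} :
      DEq g g' → DEq h h' → DEq (.comp g h) (.comp g' h')
  | mapT_congr {X Y : Fin m → DObj m n p} {a b : ∀ i, DTerm Φ Ψ (dSrc (sx i) (X i) (Y i)) (dTgt (sx i) (X i) (Y i))} :
      (∀ i, DEq (a i) (b i)) → DEq (.mapT a) (.mapT b)
  | mapS_congr {X Y : Fin n → DObj m n p} {a b : ∀ j, DTerm Φ Ψ (dSrc (sy j) (X j) (Y j)) (dTgt (sy j) (X j) (Y j))} :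
      (∀ j, DEq (a j) (b j)) → DEq (.mapS a) (.mapS b)
  | mapR_congr {X Y : Fin p → DObj m n p} {a b : ∀ l, DTerm Φ Ψ (dSrc (sz l) (X l) (Y l)) (dTgt (sz l) (X l) (Y l))} :
      (∀ l, DEq (a l) (b l)) → DEq (.mapR a) (.mapR b)
  -- categorial equations
  | id_left {X Y} (g : DTerm Φ Ψ X Y) : DEq (.comp (.id X) g) g
  | id_right {X Y} (g : DTerm Φ Ψ X Y) : DEq (.comp g (.id Y)) g
  | assoc {X Y Z W} (g : DTerm Φ Ψ X Y) (h : DTerm Φ Ψ Y Z) (t : DTerm Φ Ψ Z W) :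
      DEq (.comp (.comp g h) t) (.comp g (.comp h t))
  -- functorial equations
  | functT {X Y Z : Fin m → DObj m n p}
      (a : ∀ i, DTerm Φ Ψ (dSrc (sx i) (X i) (Y i)) (dTgt (sx i) (X i) (Y i)))
      (b : ∀ i, DTerm Φ Ψ (dSrc (sx i) (Y i) (Z i)) (dTgt (sx i) (Y i) (Z i))) :
      DEq (.comp (.mapT a) (.mapT b)) (.mapT (fun i => dComp (sx i) (a i) (b i)))
  | functS {X Y Z : Fin n → DObj m n p}
      (a : ∀ j, DTerm Φ Ψ (dSrc (sy j) (X j) (Y j)) (dTgt (sy j) (X j) (Y j)))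
      (b : ∀ j, DTerm Φ Ψ (dSrc (sy j) (Y j) (Z j)) (dTgt (sy j) (Y j) (Z j))) :
      DEq (.comp (.mapS a) (.mapS b)) (.mapS (fun j => dComp (sy j) (a j) (b j)))
  | functR {X Y Z : Fin p → DObj m n p}
      (a : ∀ l, DTerm Φ Ψ (dSrc (sz l) (X l) (Y l)) (dTgt (sz l) (X l) (Y l)))
      (b : ∀ l, DTerm Φ Ψ (dSrc (sz l) (Y l) (Z l)) (dTgt (sz l) (Y l) (Z l))) :
      DEq (.comp (.mapR a) (.mapR b)) (.mapR (fun l => dComp (sz l) (a l) (b l)))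
  | functT_id (X : Fin m → DObj m n p) :
      DEq (.mapT (fun i => dId (X i) (sx i))) (.id (.T X))
  | functS_id (X : Fin n → DObj m n p) :
      DEq (.mapS (fun j => dId (X j) (sy j))) (.id (.S X))
  | functR_id (X : Fin p → DObj m n p) :
      DEq (.mapR (fun l => dId (X l) (sz l))) (.id (.R X))
  -- g-dinatural equations
  | alphaEq (i : Fin Φ.k) (Z : Fin Φ.k → DObj m n p) {X Y : DObj m n p}
      (t : DTerm Φ Ψ X Y) :
      DEq (.comp (.mapT (vecA Φ.πL sx i Z t))
            (.comp (.alpha (updF Z i Y)) (.mapS (vecB Φ.πR sy i Z t))))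
          (.comp (.mapT (vecC Φ.πL sx i Z t))
            (.comp (.alpha (updF Z i X)) (.mapS (vecD Φ.πR sy i Z t))))
  | betaEq (i : Fin Ψ.k) (Z : Fin Ψ.k → DObj m n p) {X Y : DObj m n p}
      (t : DTerm Φ Ψ X Y) :
      DEq (.comp (.mapS (vecA Ψ.πL sy i Z t))
            (.comp (.beta (updF Z i Y)) (.mapR (vecB Ψ.πR sz i Z t))))
          (.comp (.mapS (vecC Ψ.πL sy i Z t))
            (.comp (.beta (updF Z i X)) (.mapR (vecD Ψ.πR sz i Z t))))

end DD

section Nat0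
variable {m n p gΦ gΨ : ℕ} {sx : Fin m → Bool} {sy : Fin n → Bool} {sz : Fin p → Bool}
variable {Φ : GGraph m n gΦ sx sy} {Ψ : GGraph n p gΨ sy sz}

/-- the object `T⟨A,C⟩` -/
def TAC (sx : Fin m → Bool) : DObj m n p := .T fun i => cond (sx i) .A .C
/-- the object `R⟨C,A⟩` -/
def RCA (sz : Fin p → Bool) : DObj m n p := .R fun l => cond (sz l) .C .A

/-- the argument vector of `T⟨f,1_C⟩ : T⟨A,C⟩ → T(C,…,C)` -/
def gvecC : ∀ i, DTerm Φ Ψ (dSrc (sx i) (cond (sx i) DObj.A DObj.C) DObj.C)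
    (dTgt (sx i) (cond (sx i) DObj.A DObj.C) DObj.C) := fun i => by
  cases hs : sx i
  · exact .id .C
  · exact .f

/-- the argument vector of `T⟨1_A,f⟩ : T⟨A,C⟩ → T(A,…,A)` -/
def gvecA : ∀ i, DTerm Φ Ψ (dSrc (sx i) (cond (sx i) DObj.A DObj.C) DObj.A)
    (dTgt (sx i) (cond (sx i) DObj.A DObj.C) DObj.A) := fun i => by
  cases hs : sx i
  · exact .f
  · exact .id .A

/-- the argument vector of `R⟨1_C,f⟩ : R(C,…,C) → R⟨C,A⟩` -/
def rvecC : ∀ l, DTerm Φ Ψ (dSrc (sz l) DObj.C (cond (sz l) DObj.C DObj.A))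
    (dTgt (sz l) DObj.C (cond (sz l) DObj.C DObj.A)) := fun l => by
  cases hs : sz l
  · exact .f
  · exact .id .C

/-- the argument vector of `R⟨f,1_A⟩ : R(A,…,A) → R⟨C,A⟩` -/
def rvecA : ∀ l, DTerm Φ Ψ (dSrc (sz l) DObj.A (cond (sz l) DObj.C DObj.A))
    (dTgt (sz l) DObj.A (cond (sz l) DObj.C DObj.A)) := fun l => by
  cases hs : sz l
  · exact .id .A
  · exact .f

/-- the left-hand side of the equation `(nat)`:
`R⟨1_C,f⟩ ∘ β(C,…,C) ∘ α(C,…,C) ∘ T⟨f,1_C⟩` (written diagrammatically) -/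
def natLHS (Φ : GGraph m n gΦ sx sy) (Ψ : GGraph n p gΨ sy sz) :
    DTerm Φ Ψ (TAC sx) (RCA sz) :=
  .comp (.mapT gvecC)
    (.comp (.alpha fun _ => .C) (.comp (.beta fun _ => .C) (.mapR rvecC)))

/-- the right-hand side of the equation `(nat)`:
`R⟨f,1_A⟩ ∘ β(A,…,A) ∘ α(A,…,A) ∘ T⟨1_A,f⟩` -/
def natRHS (Φ : GGraph m n gΦ sx sy) (Ψ : GGraph n p gΨ sy sz) :
    DTerm Φ Ψ (TAC sx) (RCA sz) :=
  .comp (.mapT gvecA)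
    (.comp (.alpha fun _ => .A) (.comp (.beta fun _ => .A) (.mapR rvecA)))

end Nat0

section Chains
variable {m n p gΦ gΨ : ℕ} {sx : Fin m → Bool} {sy : Fin n → Bool} {sz : Fin p → Bool}
variable {Φ : GGraph m n gΦ sx sy} {Ψ : GGraph n p gΨ sy sz}

/-- the number of occurrences of the generator `f` in a composite of primitive
morphism terms -/
def fCount : ∀ {X Y : DObj m n p}, DTerm Φ Ψ X Y → ℕ
  | _, _, .f => 1
  | _, _, .comp g h => fCount g + fCount h
  | _, _, _ => 0

/-- `Chain g` says that `g` is a composite (in any order of association) of the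
identities `1_A`, `1_C` and the generator `f`; together with `fCount g ≤ 1` this
expresses that `g` is identical, up to associativity of composition, to a term of
the form `1_C ∘ ⋯ ∘ 1_C ∘ [f] ∘ 1_A ∘ ⋯ ∘ 1_A`. -/
inductive Chain : ∀ {X Y : DObj m n p}, DTerm Φ Ψ X Y → Prop
  | f : Chain .f
  | idA : Chain (.id .A)
  | idC : Chain (.id .C)
  | comp {X Y Z} {g : DTerm Φ Ψ X Y} {h : DTerm Φ Ψ Y Z} :
      Chain g → Chain h → Chain (.comp g h)

end Chains

section CFsec
variable {m n p gΦ gΨ : ℕ} {sx : Fin m → Bool} {sy : Fin n → Bool} {sz : Fin p → Bool}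
variable {Φ : GGraph m n gΦ sx sy} {Ψ : GGraph n p gΨ sy sz}

/-- identity of morphism terms up to associativity of composition -/
inductive AEq : ∀ {X Y : DObj m n p}, DTerm Φ Ψ X Y → DTerm Φ Ψ X Y → Prop
  | refl {X Y} (g : DTerm Φ Ψ X Y) : AEq g g
  | symm {X Y} {g h : DTerm Φ Ψ X Y} : AEq g h → AEq h g
  | trans {X Y} {g h t : DTerm Φ Ψ X Y} : AEq g h → AEq h t → AEq g t
  | comp_congr {X Y Z} {g g' : DTerm Φ Ψ X Y} {h h' : DTerm Φ Ψ Y Z} :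
      AEq g g' → AEq h h' → AEq (.comp g h) (.comp g' h')
  | mapT_congr {X Y : Fin m → DObj m n p}
      {a b : ∀ i, DTerm Φ Ψ (dSrc (sx i) (X i) (Y i)) (dTgt (sx i) (X i) (Y i))} :
      (∀ i, AEq (a i) (b i)) → AEq (.mapT a) (.mapT b)
  | mapS_congr {X Y : Fin n → DObj m n p}
      {a b : ∀ j, DTerm Φ Ψ (dSrc (sy j) (X j) (Y j)) (dTgt (sy j) (X j) (Y j))} :
      (∀ j, AEq (a j) (b j)) → AEq (.mapS a) (.mapS b)
  | mapR_congr {X Y : Fin p → DObj m n p}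
      {a b : ∀ l, DTerm Φ Ψ (dSrc (sz l) (X l) (Y l)) (dTgt (sz l) (X l) (Y l))} :
      (∀ l, AEq (a l) (b l)) → AEq (.mapR a) (.mapR b)
  | assoc {X Y Z W} (g : DTerm Φ Ψ X Y) (h : DTerm Φ Ψ Y Z) (t : DTerm Φ Ψ Z W) :
      AEq (.comp (.comp g h) t) (.comp g (.comp h t))

/-- a single categorial-functorial (`CF`) contraction, applied in an arbitrary
subterm position -/
inductive CFRaw : ∀ {X Y : DObj m n p}, DTerm Φ Ψ X Y → DTerm Φ Ψ X Y → Prop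
  | id_left {X Y} (g : DTerm Φ Ψ X Y) : CFRaw (.comp (.id X) g) g
  | id_right {X Y} (g : DTerm Φ Ψ X Y) : CFRaw (.comp g (.id Y)) g
  | functT {X Y Z : Fin m → DObj m n p}
      (a : ∀ i, DTerm Φ Ψ (dSrc (sx i) (X i) (Y i)) (dTgt (sx i) (X i) (Y i)))
      (b : ∀ i, DTerm Φ Ψ (dSrc (sx i) (Y i) (Z i)) (dTgt (sx i) (Y i) (Z i))) :
      CFRaw (.comp (.mapT a) (.mapT b)) (.mapT (fun i => dComp (sx i) (a i) (b i)))
  | functS {X Y Z : Fin n → DObj m n p}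
      (a : ∀ j, DTerm Φ Ψ (dSrc (sy j) (X j) (Y j)) (dTgt (sy j) (X j) (Y j)))
      (b : ∀ j, DTerm Φ Ψ (dSrc (sy j) (Y j) (Z j)) (dTgt (sy j) (Y j) (Z j))) :
      CFRaw (.comp (.mapS a) (.mapS b)) (.mapS (fun j => dComp (sy j) (a j) (b j)))
  | functR {X Y Z : Fin p → DObj m n p}
      (a : ∀ l, DTerm Φ Ψ (dSrc (sz l) (X l) (Y l)) (dTgt (sz l) (X l) (Y l)))
      (b : ∀ l, DTerm Φ Ψ (dSrc (sz l) (Y l) (Z l)) (dTgt (sz l) (Y l) (Z l))) :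
      CFRaw (.comp (.mapR a) (.mapR b)) (.mapR (fun l => dComp (sz l) (a l) (b l)))
  | functT_id (X : Fin m → DObj m n p) :
      CFRaw (.mapT (fun i => dId (X i) (sx i))) (.id (.T X))
  | functS_id (X : Fin n → DObj m n p) :
      CFRaw (.mapS (fun j => dId (X j) (sy j))) (.id (.S X))
  | functR_id (X : Fin p → DObj m n p) :
      CFRaw (.mapR (fun l => dId (X l) (sz l))) (.id (.R X))
  | comp_left {X Y Z} {g g' : DTerm Φ Ψ X Y} (h : DTerm Φ Ψ Y Z) :
      CFRaw g g' → CFRaw (.comp g h) (.comp g' h)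
  | comp_right {X Y Z} (g : DTerm Φ Ψ X Y) {h h' : DTerm Φ Ψ Y Z} :
      CFRaw h h' → CFRaw (.comp g h) (.comp g h')
  | mapT_arg {X Y : Fin m → DObj m n p}
      (a : ∀ i, DTerm Φ Ψ (dSrc (sx i) (X i) (Y i)) (dTgt (sx i) (X i) (Y i)))
      (i₀ : Fin m) (t' : DTerm Φ Ψ (dSrc (sx i₀) (X i₀) (Y i₀)) (dTgt (sx i₀) (X i₀) (Y i₀))) :
      CFRaw (a i₀) t' → CFRaw (.mapT a) (.mapT (Function.update a i₀ t'))
  | mapS_arg {X Y : Fin n → DObj m n p}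
      (a : ∀ j, DTerm Φ Ψ (dSrc (sy j) (X j) (Y j)) (dTgt (sy j) (X j) (Y j)))
      (j₀ : Fin n) (t' : DTerm Φ Ψ (dSrc (sy j₀) (X j₀) (Y j₀)) (dTgt (sy j₀) (X j₀) (Y j₀))) :
      CFRaw (a j₀) t' → CFRaw (.mapS a) (.mapS (Function.update a j₀ t'))
  | mapR_arg {X Y : Fin p → DObj m n p}
      (a : ∀ l, DTerm Φ Ψ (dSrc (sz l) (X l) (Y l)) (dTgt (sz l) (X l) (Y l)))
      (l₀ : Fin p) (t' : DTerm Φ Ψ (dSrc (sz l₀) (X l₀) (Y l₀)) (dTgt (sz l₀) (X l₀) (Y l₀))) :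
      CFRaw (a l₀) t' → CFRaw (.mapR a) (.mapR (Function.update a l₀ t'))

/-- a `CF` reduction step on morphism terms identified up to associativity of
composition -/
def CFStep {X Y : DObj m n p} (g h : DTerm Φ Ψ X Y) : Prop :=
  ∃ g' h', AEq g g' ∧ CFRaw g' h' ∧ AEq h' h

/-- `g` is in `CF` normal form -/
def CFNormal {X Y : DObj m n p} (g : DTerm Φ Ψ X Y) : Prop := ¬ ∃ h, CFStep g h

end CFsec

section Msec
variable {m n p gΦ gΨ : ℕ} {sx : Fin m → Bool} {sy : Fin n → Bool} {sz : Fin p → Bool}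
variable {Φ : GGraph m n gΦ sx sy} {Ψ : GGraph n p gΨ sy sz}

/-- an argument of one of the operations `T`, `S`, `R` inside a bar term:
a composite of identities and at most one occurrence of `f` -/
def ArgOK {X Y : DObj m n p} (t : DTerm Φ Ψ X Y) : Prop := Chain t ∧ fCount t ≤ 1

/-- a term `T̄`: a (possibly empty) composite of terms of the form
`1 ∘ ⋯ ∘ T(t₁,…,t_m) ∘ ⋯ ∘ 1` with each `tᵢ` a composite of identities and at most
one occurrence of `f` -/
inductive TBar : ∀ {X Y : DObj m n p}, DTerm Φ Ψ X Y → Prop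
  | id (X : DObj m n p) : TBar (.id X)
  | map {X Y : Fin m → DObj m n p}
      (a : ∀ i, DTerm Φ Ψ (dSrc (sx i) (X i) (Y i)) (dTgt (sx i) (X i) (Y i))) :
      (∀ i, ArgOK (a i)) → TBar (.mapT a)
  | comp {X Y Z} {g : DTerm Φ Ψ X Y} {h : DTerm Φ Ψ Y Z} :
      TBar g → TBar h → TBar (.comp g h)

/-- a term `S̄` -/
inductive SBar : ∀ {X Y : DObj m n p}, DTerm Φ Ψ X Y → Prop
  | id (X : DObj m n p) : SBar (.id X)
  | map {X Y : Fin n → DObj m n p}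
      (a : ∀ j, DTerm Φ Ψ (dSrc (sy j) (X j) (Y j)) (dTgt (sy j) (X j) (Y j))) :
      (∀ j, ArgOK (a j)) → SBar (.mapS a)
  | comp {X Y Z} {g : DTerm Φ Ψ X Y} {h : DTerm Φ Ψ Y Z} :
      SBar g → SBar h → SBar (.comp g h)

/-- a term `R̄` -/
inductive RBar : ∀ {X Y : DObj m n p}, DTerm Φ Ψ X Y → Prop
  | id (X : DObj m n p) : RBar (.id X)
  | map {X Y : Fin p → DObj m n p}
      (a : ∀ l, DTerm Φ Ψ (dSrc (sz l) (X l) (Y l)) (dTgt (sz l) (X l) (Y l))) :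
      (∀ l, ArgOK (a l)) → RBar (.mapR a)
  | comp {X Y Z} {g : DTerm Φ Ψ X Y} {h : DTerm Φ Ψ Y Z} :
      RBar g → RBar h → RBar (.comp g h)

/-- the set `ℳ`: morphism terms of type `T⟨A,C⟩ → R⟨C,A⟩` of the form
`R̄ β(Y₁,…,Y_{k_Ψ}) S̄ α(X₁,…,X_{k_Φ}) T̄` (up to associativity of composition) with
all the `X`'s and `Y`'s in `{A, C}` -/
def InM (g : DTerm Φ Ψ (TAC sx) (RCA sz)) : Prop :=
  ∃ (Xv : Fin Φ.k → DObj m n p) (Yv : Fin Ψ.k → DObj m n p)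
    (tb : DTerm Φ Ψ (TAC sx) (.T fun i => Xv (Φ.πL i)))
    (sb : DTerm Φ Ψ (.S fun j => Xv (Φ.πR j)) (.S fun j => Yv (Ψ.πL j)))
    (rb : DTerm Φ Ψ (.R fun l => Yv (Ψ.πR l)) (RCA sz)),
    (∀ c, Xv c = DObj.A ∨ Xv c = DObj.C) ∧ (∀ c, Yv c = DObj.A ∨ Yv c = DObj.C) ∧
    TBar tb ∧ SBar sb ∧ RBar rb ∧
    AEq g (.comp tb (.comp (.alpha Xv) (.comp sb (.comp (.beta Yv) rb))))

end Msec

/-! ### The set `ℳ₀` of `CF`-normal terms of `ℳ`, and `D` reduction -/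

/-- the possible arguments `1_A`, `1_C`, `f` of `T`, `S`, `R` in a term of `ℳ₀` -/
inductive MArg : Type
  | idA : MArg
  | idC : MArg
  | ff : MArg
deriving DecidableEq

section MZsec
variable {m n p gΦ gΨ : ℕ} {sx : Fin m → Bool} {sy : Fin n → Bool} {sz : Fin p → Bool}

/-- A term of `ℳ₀`, i.e. a `CF`-normal form `[R(t⃗)] β(Y⃗) [S(h⃗)] α(X⃗) [T(g⃗)]` of a
term of `ℳ`, of type `T⟨A,C⟩ → R⟨C,A⟩`.  Such a term is completely determined by the
tuples `X⃗` and `Y⃗` of objects from `{A, C}` (here `true` codes `C` and `false`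
codes `A`), subject to the typing (compatibility) condition below; the argument
vectors `g⃗`, `h⃗`, `t⃗` are then recovered by `MZ.g`, `MZ.h`, `MZ.t`. -/
structure MZ (Φ : GGraph m n gΦ sx sy) (Ψ : GGraph n p gΨ sy sz) : Type where
  Xv : Fin Φ.k → Bool
  Yv : Fin Ψ.k → Bool
  compat : ∀ j : Fin n,
    (sy j = true → ¬(Xv (Φ.πR j) = true ∧ Yv (Ψ.πL j) = false)) ∧
    (sy j = false → ¬(Yv (Ψ.πL j) = true ∧ Xv (Φ.πR j) = false))

variable {Φ : GGraph m n gΦ sx sy} {Ψ : GGraph n p gΨ sy sz}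

/-- the argument of `T` at the place `x_i` -/
def MZ.g (z : MZ Φ Ψ) (i : Fin m) : MArg :=
  if sx i then (if z.Xv (Φ.πL i) then .ff else .idA)
  else (if z.Xv (Φ.πL i) then .idC else .ff)

/-- the argument of `S` at the place `y_j` -/
def MZ.h (z : MZ Φ Ψ) (j : Fin n) : MArg :=
  if sy j then
    (if z.Xv (Φ.πR j) then .idC else if z.Yv (Ψ.πL j) then .ff else .idA)
  else
    (if z.Yv (Ψ.πL j) then .idC else if z.Xv (Φ.πR j) then .ff else .idA)

/-- the argument of `R` at the place `z_l` -/
def MZ.t (z : MZ Φ Ψ) (l : Fin p) : MArg :=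
  if sz l then (if z.Yv (Ψ.πR l) then .idC else .ff)
  else (if z.Yv (Ψ.πR l) then .ff else .idA)

/-- the argument occupying a (left- or right-hand) argument place of `Φ` -/
def MZ.occPhi (z : MZ Φ Ψ) : Fin m ⊕ Fin n → MArg := Sum.elim z.g z.h

/-- the argument occupying a (left- or right-hand) argument place of `Ψ` -/
def MZ.occPsi (z : MZ Φ Ψ) : Fin n ⊕ Fin p → MArg := Sum.elim z.h z.t

/-- One step of `D` reduction on the set `ℳ₀`, applied to the entire term: an
`(α_i)`-step replaces the `i`-th argument `C` of `α` by `A`, provided all the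
arguments `g_j` with `x_j ∈ Φ_i⁺` and all the arguments `h_j` with `y_j ∈ Φ_i⁻`
are `f`; the affected arguments are updated accordingly (which, the terms of `ℳ₀`
being determined by `X⃗` and `Y⃗`, is captured by updating `X⃗`).  `(β_i)`-steps are
analogous. -/
inductive DStep : MZ Φ Ψ → MZ Φ Ψ → Prop
  | alphaStep (z z' : MZ Φ Ψ) (i : Fin Φ.k) :
      z.Xv i = true →
      (∀ j : Fin m, sx j = true → Φ.πL j = i → z.g j = .ff) →
      (∀ j : Fin n, sy j = false → Φ.πR j = i → z.h j = .ff) →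
      z'.Xv = Function.update z.Xv i false →
      z'.Yv = z.Yv →
      DStep z z'
  | betaStep (z z' : MZ Φ Ψ) (i : Fin Ψ.k) :
      z.Yv i = true →
      (∀ j : Fin n, sy j = true → Ψ.πL j = i → z.h j = .ff) →
      (∀ l : Fin p, sz l = false → Ψ.πR l = i → z.t l = .ff) →
      z'.Yv = Function.update z.Yv i false →
      z'.Xv = z.Xv →
      DStep z z'

/-- a term of `ℳ₀` is in `D` normal form -/
def DNormal (z : MZ Φ Ψ) : Prop := ¬ ∃ z', DStep z z'

end MZsec

section ToTerm
variable {m n p gΦ gΨ : ℕ} {sx : Fin m → Bool} {sy : Fin n → Bool} {sz : Fin p → Bool}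
variable {Φ : GGraph m n gΦ sx sy} {Ψ : GGraph n p gΨ sy sz}

/-- the object (`A` or `C`) coded by a Boolean (`true` codes `C`) -/
def boolObj (b : Bool) : DObj m n p := cond b .C .A

/-- the argument vector `g⃗` of a term of `ℳ₀`, as morphism terms -/
def gTm (z : MZ Φ Ψ) :
    ∀ i, DTerm Φ Ψ (dSrc (sx i) (cond (sx i) DObj.A DObj.C) (boolObj (z.Xv (Φ.πL i))))
      (dTgt (sx i) (cond (sx i) DObj.A DObj.C) (boolObj (z.Xv (Φ.πL i)))) := fun i => by
  unfold boolObj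
  cases hs : sx i <;> cases hx : z.Xv (Φ.πL i)
  · exact .f
  · exact .id .C
  · exact .id .A
  · exact .f

/-- the argument vector `h⃗` of a term of `ℳ₀`, as morphism terms -/
def hTm (z : MZ Φ Ψ) :
    ∀ j, DTerm Φ Ψ (dSrc (sy j) (boolObj (z.Xv (Φ.πR j))) (boolObj (z.Yv (Ψ.πL j))))
      (dTgt (sy j) (boolObj (z.Xv (Φ.πR j))) (boolObj (z.Yv (Ψ.πL j)))) := fun j => by
  unfold boolObj
  cases hs : sy j <;> cases hx : z.Xv (Φ.πR j) <;> cases hy : z.Yv (Ψ.πL j)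
  · exact .id .A
  · exact absurd (And.intro hy hx) ((z.compat j).2 hs)
  · exact .f
  · exact .id .C
  · exact .id .A
  · exact .f
  · exact absurd (And.intro hx hy) ((z.compat j).1 hs)
  · exact .id .C

/-- the argument vector `t⃗` of a term of `ℳ₀`, as morphism terms -/
def tTm (z : MZ Φ Ψ) :
    ∀ l, DTerm Φ Ψ (dSrc (sz l) (boolObj (z.Yv (Ψ.πR l))) (cond (sz l) DObj.C DObj.A))
      (dTgt (sz l) (boolObj (z.Yv (Ψ.πR l))) (cond (sz l) DObj.C DObj.A)) := fun l => by
  unfold boolObj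
  cases hs : sz l <;> cases hy : z.Yv (Ψ.πR l)
  · exact .id .A
  · exact .f
  · exact .f
  · exact .id .C

/-- the morphism term `R(t⃗) β(Y⃗) S(h⃗) α(X⃗) T(g⃗)` determined by a term of `ℳ₀`
(with all three functor applications present; dropping those whose arguments are all
identities yields the corresponding `CF` normal form) -/
def MZ.toTerm (z : MZ Φ Ψ) : DTerm Φ Ψ (TAC sx) (RCA sz) :=
  .comp (.mapT (gTm z))
    (.comp (.alpha fun c => boolObj (z.Xv c))
      (.comp (.mapS (hTm z))
        (.comp (.beta fun c => boolObj (z.Yv c)) (.mapR (tTm z)))))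

/-- `z` represents the `CF` normal form `CF(g)` of `g`: the term of `ℳ₀` coded by
`z` and the term `g` have a common `CF` reduct which is in `CF` normal form -/
def ReprCF (g : DTerm Φ Ψ (TAC sx) (RCA sz)) (z : MZ Φ Ψ) : Prop :=
  ∃ nf, Relation.ReflTransGen CFStep g nf ∧
    Relation.ReflTransGen CFStep z.toTerm nf ∧ CFNormal nf

end ToTerm

/-!
Every morphism term between the objects `A` and `C` is provably equal to `1_A`, `1_C` or `f`, so two
such terms of the same type are equal in `𝒟`.  Hence the g-dinaturality hexagons for `f`, composed
with suitable functor applications, yield all steps of `D` reduction.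

For the converse, a term of `ℳ₀` is a point of the Boolean lattice `2^{k_Φ} × 2^{k_Ψ}` and `D`
reduction is the downward covering relation of that lattice restricted to the typable points.  Let
`S(v⃗)` and `R(v⃗)` denote the connected components of the cover graph on the vectors `X⃗`, resp.
pairs `X⃗, Y⃗`, that can label the arguments of `α` and `β` in a term with target `S(v⃗)`, resp.
`R(v⃗)`, and let all other objects denote a point.  The two sides of a hexagon differ in one
coordinate, so this is a set-valued model of the `𝒦_{Φ,Ψ}`-equations, and a term of `ℳ₀` denotes
its own component.  The typable points are closed under meets, so the modularity of the lattice
makes `D` reduction confluent and each component has one normal form.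
-/

section Rewriting

open Relation

theorem eqvGen_iff_eq_of_normal {α : Type*} {r : α → α → Prop}
    (hr : ∀ a b c, r a b → r a c → ∃ d, ReflGen r b d ∧ ReflTransGen r c d)
    {a b a' b' : α} (ha : ReflTransGen r a a') (ha' : ¬∃ c, r a' c)
    (hb : ReflTransGen r b b') (hb' : ¬∃ c, r b' c) :
    EqvGen r a b ↔ a' = b' := by
  have eq_of_normal {c d : α} (hc : ¬∃ e, r c e) (h : ReflTransGen r c d) : d = c :=
    (reflTransGen_iff_eq fun e he => hc ⟨e, he⟩).1 h
  have eqvGen_of_steps {c d : α} (h : ReflTransGen r c d) : EqvGen r c d :=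
    EqvGen.reflTransGen_le_eqvGen r _ _ h
  constructor
  · intro hab
    have hab' : EqvGen r a' b' :=
      .trans _ _ _ (.symm _ _ (eqvGen_of_steps ha)) (.trans _ _ _ hab (eqvGen_of_steps hb))
    obtain ⟨d, had, hbd⟩ : Join (ReflTransGen r) a' b' :=
      (equivalence_join_reflTransGen hr).eqvGen_iff.1 <|
        EqvGen.mono (fun _ d h => ⟨d, .single h, .refl⟩) _ _ hab'
    exact (eq_of_normal ha' had).symm.trans (eq_of_normal hb' hbd)
  · rintro rfl
    exact .trans _ _ _ (eqvGen_of_steps ha) (.symm _ _ (eqvGen_of_steps hb))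

end Rewriting

section CoverComponents

variable {P Q : Type} [Preorder P] [Preorder Q]

/-- The connected components of the cover graph on a subset `s` of a preorder; the covering relation
is that of the ambient preorder. -/
def CoverComponents (s : Set P) : Type := Quot fun a b : s => (a : P) ⩿ b

namespace CoverComponents

/-- The component of a point of `s`. -/
def mk {s : Set P} (a : P) (ha : a ∈ s) : CoverComponents s := Quot.mk _ ⟨a, ha⟩

theorem mk_eq_mk {s : Set P} {a b : P} {ha : a ∈ s} {hb : b ∈ s} (h : a ⩿ b) :
    mk a ha = mk b hb :=
  Quot.sound h

/-- The map on components induced by a map that preserves the covering relation. -/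
def map {s : Set P} {t : Set Q} (F : P → Q) (hst : Set.MapsTo F s t)
    (hF : ∀ a b, a ⩿ b → F a ⩿ F b) : CoverComponents s → CoverComponents t :=
  Quot.map (hst.restrict F s t) fun a b => hF a b

/-- The map on components induced by an inclusion of subsets. -/
def inclusion {s t : Set P} (hst : s ⊆ t) : CoverComponents s → CoverComponents t :=
  map id hst fun _ _ h => h

end CoverComponents

end CoverComponents

section Soundness

variable {m n p gΦ gΨ : ℕ} {sx : Fin m → Bool} {sy : Fin n → Bool} {sz : Fin p → Bool}
variable {Φ : GGraph m n gΦ sx sy} {Ψ : GGraph n p gΨ sy sz}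

instance {X Y : DObj m n p} :
    Trans (DEq (Φ := Φ) (Ψ := Ψ) (X := X) (Y := Y)) DEq DEq :=
  ⟨.trans⟩

theorem AEq.deq {X Y : DObj m n p} {g h : DTerm Φ Ψ X Y} (hgh : AEq g h) : DEq g h := by
  induction hgh with
  | refl g => exact .refl g
  | symm _ ih => exact ih.symm
  | trans _ _ ih₁ ih₂ => exact ih₁.trans ih₂
  | comp_congr _ _ ih₁ ih₂ => exact .comp_congr ih₁ ih₂
  | mapT_congr _ ih => exact .mapT_congr ih
  | mapS_congr _ ih => exact .mapS_congr ih
  | mapR_congr _ ih => exact .mapR_congr ih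
  | assoc g h t => exact .assoc g h t

theorem DEq.update {I : Type*} [DecidableEq I] {X Y : I → DObj m n p}
    {a : ∀ i, DTerm Φ Ψ (X i) (Y i)} {i₀ : I} {t : DTerm Φ Ψ (X i₀) (Y i₀)}
    (h : DEq (a i₀) t) (i : I) : DEq (a i) (Function.update a i₀ t i) :=
  (Function.forall_update_iff a fun j => DEq (a j)).2 ⟨h, fun _ _ => .refl _⟩ i

theorem CFRaw.deq {X Y : DObj m n p} {g h : DTerm Φ Ψ X Y} (hgh : CFRaw g h) : DEq g h := by
  induction hgh with
  | id_left g => exact .id_left g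
  | id_right g => exact .id_right g
  | functT a b => exact .functT a b
  | functS a b => exact .functS a b
  | functR a b => exact .functR a b
  | functT_id X => exact .functT_id X
  | functS_id X => exact .functS_id X
  | functR_id X => exact .functR_id X
  | comp_left h _ ih => exact .comp_congr ih (.refl h)
  | comp_right g _ ih => exact .comp_congr (.refl g) ih
  | mapT_arg a _ _ _ ih => exact .mapT_congr ih.update
  | mapS_arg a _ _ _ ih => exact .mapS_congr ih.update
  | mapR_arg a _ _ _ ih => exact .mapR_congr ih.update

theorem CFStep.deq {X Y : DObj m n p} {g h : DTerm Φ Ψ X Y} : CFStep g h → DEq g h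
  | ⟨_, _, hg, hgh, hh⟩ => hg.deq.trans (hgh.deq.trans hh.deq)

theorem deq_of_reflTransGen_cfStep {X Y : DObj m n p} {g h : DTerm Φ Ψ X Y}
    (hgh : Relation.ReflTransGen CFStep g h) : DEq g h := by
  induction hgh with
  | refl => exact .refl g
  | tail _ h ih => exact ih.trans h.deq

theorem ReprCF.deq {g : DTerm Φ Ψ (TAC sx) (RCA sz)} {z : MZ Φ Ψ} : ReprCF g z → DEq g z.toTerm
  | ⟨_, hg, hz, _⟩ =>
    (deq_of_reflTransGen_cfStep hg).trans (deq_of_reflTransGen_cfStep hz).symm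

/-- The functor arguments of variance `s` from `X` to `Y`. -/
abbrev ArgTerm (Φ : GGraph m n gΦ sx sy) (Ψ : GGraph n p gΨ sy sz) (s : Bool)
    (X Y : DObj m n p) : Type :=
  DTerm Φ Ψ (dSrc s X Y) (dTgt s X Y)

/-- The objects `A` and `C` that generate `𝒟`. -/
def IsBase (X : DObj m n p) : Prop := X = .A ∨ X = .C

/-- The normal forms `1_A`, `1_C` and `f` of the morphism terms between `A` and `C`. -/
inductive IsPrimitive : ∀ {X Y : DObj m n p}, DTerm Φ Ψ X Y → Prop
  | idA : IsPrimitive (.id .A)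
  | idC : IsPrimitive (.id .C)
  | f : IsPrimitive .f

theorem isBase_boolObj (b : Bool) : IsBase (boolObj b : DObj m n p) := by
  cases b <;> simp [IsBase, boolObj]

theorem isBase_cond (s : Bool) {X Y : DObj m n p} (hX : IsBase X) (hY : IsBase Y) :
    IsBase (cond s X Y) := by
  cases s <;> assumption

theorem isBase_iff {X Y : DObj m n p} (g : DTerm Φ Ψ X Y) : IsBase X ↔ IsBase Y := by
  induction g with
  | comp _ _ ih₁ ih₂ => exact ih₁.trans ih₂
  | _ => simp [IsBase]

theorem ArgTerm.isBase_iff {s : Bool} {X Y : DObj m n p} (a : ArgTerm Φ Ψ s X Y) :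
    IsBase X ↔ IsBase Y := by
  cases s
  · exact (GDin.isBase_iff a).symm
  · exact GDin.isBase_iff a

theorem exists_isPrimitive_deq {X Y : DObj m n p} (g : DTerm Φ Ψ X Y) (hX : IsBase X) :
    ∃ g', IsPrimitive g' ∧ DEq g g' := by
  induction g with
  | f => exact ⟨_, .f, .refl _⟩
  | id X =>
    rcases hX with rfl | rfl
    exacts [⟨_, .idA, .refl _⟩, ⟨_, .idC, .refl _⟩]
  | comp g h ihg ihh =>
    obtain ⟨g', hg', hg⟩ := ihg hX
    obtain ⟨h', hh', hh⟩ := ihh ((isBase_iff g).1 hX)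
    suffices ∃ k, IsPrimitive k ∧ DEq (.comp g' h') k from
      this.imp fun k hk => ⟨hk.1, (DEq.comp_congr hg hh).trans hk.2⟩
    cases hg' with
    | f =>
      cases hh' with
      | idC => exact ⟨_, .f, .id_right _⟩
    | idA => exact ⟨h', hh', .id_left h'⟩
    | idC => exact ⟨h', hh', .id_left h'⟩
  | alpha | beta | mapT | mapS | mapR => simp [IsBase] at hX

theorem deq_of_isBase {X Y : DObj m n p} (hX : IsBase X) (g h : DTerm Φ Ψ X Y) : DEq g h := by
  obtain ⟨g', hg', hg⟩ := exists_isPrimitive_deq g hX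
  obtain ⟨h', hh', hh⟩ := exists_isPrimitive_deq h hX
  suffices g' = h' from hg.trans (this ▸ hh.symm)
  cases hg' <;> cases hh' <;> rfl

theorem ArgTerm.deq_of_isBase {s : Bool} {X Y : DObj m n p} (hX : IsBase X)
    (a b : ArgTerm Φ Ψ s X Y) : DEq a b := by
  cases s
  · exact GDin.deq_of_isBase ((ArgTerm.isBase_iff a).1 hX) a b
  · exact GDin.deq_of_isBase hX a b

theorem mixT_eq_cond {q k : ℕ} (pl : Fin q → Fin k) (s : Fin q → Bool) (i : Fin k)
    (Z : Fin k → DObj m n p) (P N : DObj m n p) (j : Fin q) :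
    mixT pl s i Z P N j = cond (s j) (updF Z i P (pl j)) (updF Z i N (pl j)) := by
  cases h : s j <;> simp [mixT, updF, h]

theorem nonempty_argTerm_mixT_right {q k : ℕ} {pl : Fin q → Fin k} {s : Fin q → Bool} {i : Fin k}
    {Z : Fin k → DObj m n p} {P N X : DObj m n p} {j : Fin q}
    (a : ArgTerm Φ Ψ (s j) X (updF Z i P (pl j))) (b : ArgTerm Φ Ψ (s j) X (updF Z i N (pl j))) :
    Nonempty (ArgTerm Φ Ψ (s j) X (mixT pl s i Z P N j)) := by
  rw [mixT_eq_cond]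
  generalize s j = e at *
  cases e
  exacts [⟨b⟩, ⟨a⟩]

theorem nonempty_argTerm_mixT_left {q k : ℕ} {pl : Fin q → Fin k} {s : Fin q → Bool} {i : Fin k}
    {Z : Fin k → DObj m n p} {P N Y : DObj m n p} {j : Fin q}
    (a : ArgTerm Φ Ψ (s j) (updF Z i P (pl j)) Y) (b : ArgTerm Φ Ψ (s j) (updF Z i N (pl j)) Y) :
    Nonempty (ArgTerm Φ Ψ (s j) (mixT pl s i Z P N j) Y) := by
  rw [mixT_eq_cond]
  generalize s j = e at *
  cases e
  exacts [⟨b⟩, ⟨a⟩]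

theorem mapT_deq_comp {X Y Z : Fin m → DObj m n p} (hX : ∀ i, IsBase (X i))
    (a : ∀ i, ArgTerm Φ Ψ (sx i) (X i) (Z i)) (b : ∀ i, ArgTerm Φ Ψ (sx i) (X i) (Y i))
    (c : ∀ i, ArgTerm Φ Ψ (sx i) (Y i) (Z i)) : DEq (.mapT a) (.comp (.mapT b) (.mapT c)) :=
  .trans (.mapT_congr fun i => ArgTerm.deq_of_isBase (hX i) _ _) (.symm (.functT b c))

theorem mapS_deq_comp {X Y Z : Fin n → DObj m n p} (hX : ∀ i, IsBase (X i))
    (a : ∀ i, ArgTerm Φ Ψ (sy i) (X i) (Z i)) (b : ∀ i, ArgTerm Φ Ψ (sy i) (X i) (Y i))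
    (c : ∀ i, ArgTerm Φ Ψ (sy i) (Y i) (Z i)) : DEq (.mapS a) (.comp (.mapS b) (.mapS c)) :=
  .trans (.mapS_congr fun i => ArgTerm.deq_of_isBase (hX i) _ _) (.symm (.functS b c))

theorem mapR_deq_comp {X Y Z : Fin p → DObj m n p} (hX : ∀ i, IsBase (X i))
    (a : ∀ i, ArgTerm Φ Ψ (sz i) (X i) (Z i)) (b : ∀ i, ArgTerm Φ Ψ (sz i) (X i) (Y i))
    (c : ∀ i, ArgTerm Φ Ψ (sz i) (Y i) (Z i)) : DEq (.mapR a) (.comp (.mapR b) (.mapR c)) :=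
  .trans (.mapR_congr fun i => ArgTerm.deq_of_isBase (hX i) _ _) (.symm (.functR b c))

theorem DEq.comp₃_assoc {V W X Y Z : DObj m n p} (g : DTerm Φ Ψ V W) (h : DTerm Φ Ψ W X)
    (k : DTerm Φ Ψ X Y) (l : DTerm Φ Ψ Y Z) :
    DEq (.comp (.comp g (.comp h k)) l) (.comp g (.comp h (.comp k l))) :=
  (DEq.assoc _ _ _).trans (.comp_congr (.refl g) (.assoc _ _ _))

theorem DEq.comp₃_of_factors {U V W X Y Z : DObj m n p} {g : DTerm Φ Ψ U W} {k : DTerm Φ Ψ X Z}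
    {a : DTerm Φ Ψ U V} {u : DTerm Φ Ψ V W} {v : DTerm Φ Ψ X Y} {b : DTerm Φ Ψ Y Z}
    (hg : DEq g (.comp a u)) (hk : DEq k (.comp v b)) (t : DTerm Φ Ψ W X) :
    DEq (.comp g (.comp t k)) (.comp a (.comp (.comp u (.comp t v)) b)) :=
  calc DEq (.comp g (.comp t k)) (.comp (.comp a u) (.comp t (.comp v b))) :=
        .comp_congr hg (.comp_congr (.refl t) hk)
    DEq _ (.comp a (.comp u (.comp t (.comp v b)))) := .assoc _ _ _
    DEq _ (.comp a (.comp (.comp u (.comp t v)) b)) :=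
        .comp_congr (.refl a) (DEq.comp₃_assoc u t v b).symm

/-- Both sides are a hexagon for `t`, composed with functor applications whose arguments are unique
because they connect base objects. -/
theorem alpha_slide {X Y : DObj m n p} (t : DTerm Φ Ψ X Y) {i : Fin Φ.k}
    {Z W W' : Fin Φ.k → DObj m n p} (hW : W = updF Z i Y) (hW' : W' = updF Z i X)
    {x : Fin m → DObj m n p} {y : Fin n → DObj m n p}
    (hx : ∀ j, IsBase (x j)) (hy : ∀ j, IsBase (y j))
    (a : ∀ j, ArgTerm Φ Ψ (sx j) (x j) (W (Φ.πL j)))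
    (a' : ∀ j, ArgTerm Φ Ψ (sx j) (x j) (W' (Φ.πL j)))
    (b : ∀ j, ArgTerm Φ Ψ (sy j) (W (Φ.πR j)) (y j))
    (b' : ∀ j, ArgTerm Φ Ψ (sy j) (W' (Φ.πR j)) (y j)) :
    DEq (.comp (.mapT a) (.comp (.alpha W) (.mapS b)))
      (.comp (.mapT a') (.comp (.alpha W') (.mapS b'))) := by
  subst hW hW'
  have a₀ j := (nonempty_argTerm_mixT_right (a' j) (a j)).some
  have b₀ j := (nonempty_argTerm_mixT_left (b j) (b' j)).some
  have hb j : IsBase (updF Z i Y (Φ.πR j)) := (b j).isBase_iff.2 (hy j)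
  have hb' j : IsBase (updF Z i X (Φ.πR j)) := (b' j).isBase_iff.2 (hy j)
  calc
    DEq _ _ := .comp₃_of_factors (mapT_deq_comp hx a a₀ (vecA _ _ i Z t))
      (mapS_deq_comp hb b (vecB _ _ i Z t) b₀) _
    DEq _ _ := .comp_congr (.refl _) (.comp_congr (.alphaEq i Z t) (.refl _))
    DEq _ _ := .symm <| .comp₃_of_factors (mapT_deq_comp hx a' a₀ (vecC _ _ i Z t))
      (mapS_deq_comp hb' b' (vecD _ _ i Z t) b₀) _

theorem beta_slide {X Y : DObj m n p} (t : DTerm Φ Ψ X Y) {i : Fin Ψ.k}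
    {Z W W' : Fin Ψ.k → DObj m n p} (hW : W = updF Z i Y) (hW' : W' = updF Z i X)
    {y : Fin n → DObj m n p} {z : Fin p → DObj m n p}
    (hy : ∀ j, IsBase (y j)) (hz : ∀ j, IsBase (z j))
    (a : ∀ j, ArgTerm Φ Ψ (sy j) (y j) (W (Ψ.πL j)))
    (a' : ∀ j, ArgTerm Φ Ψ (sy j) (y j) (W' (Ψ.πL j)))
    (b : ∀ j, ArgTerm Φ Ψ (sz j) (W (Ψ.πR j)) (z j))
    (b' : ∀ j, ArgTerm Φ Ψ (sz j) (W' (Ψ.πR j)) (z j)) :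
    DEq (.comp (.mapS a) (.comp (.beta W) (.mapR b)))
      (.comp (.mapS a') (.comp (.beta W') (.mapR b'))) := by
  subst hW hW'
  have a₀ j := (nonempty_argTerm_mixT_right (a' j) (a j)).some
  have b₀ j := (nonempty_argTerm_mixT_left (b j) (b' j)).some
  have hb j : IsBase (updF Z i Y (Ψ.πR j)) := (b j).isBase_iff.2 (hz j)
  have hb' j : IsBase (updF Z i X (Ψ.πR j)) := (b' j).isBase_iff.2 (hz j)
  calc
    DEq _ _ := .comp₃_of_factors (mapS_deq_comp hy a a₀ (vecA _ _ i Z t))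
      (mapR_deq_comp hb b (vecB _ _ i Z t) b₀) _
    DEq _ _ := .comp_congr (.refl _) (.comp_congr (.betaEq i Z t) (.refl _))
    DEq _ _ := .symm <| .comp₃_of_factors (mapS_deq_comp hy a' a₀ (vecC _ _ i Z t))
      (mapR_deq_comp hb' b' (vecD _ _ i Z t) b₀) _

theorem updF_eq_update {k : ℕ} {γ : Type*} (A : Fin k → γ) (c : Fin k) (X : γ) :
    updF A c X = Function.update A c X := by
  funext j
  simp only [updF, Function.update_apply]

theorem boolObj_eq_updF {k : ℕ} {X X' : Fin k → Bool} {i : Fin k} {b : Bool}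
    (h : X' = Function.update X i b) :
    (fun c => (boolObj (X' c) : DObj m n p)) = updF (fun c => boolObj (X c)) i (boolObj b) := by
  rw [h, updF_eq_update]
  exact Function.comp_update boolObj X i b

theorem DStep.deq {z z' : MZ Φ Ψ} (h : DStep z z') : DEq z.toTerm z'.toTerm := by
  cases h with
  | alphaStep i hi _ _ hX hY =>
    obtain ⟨X, Y, _⟩ := z
    obtain ⟨X', Y', _⟩ := z'
    cases hY
    calc
      DEq _ _ := (DEq.comp₃_assoc _ _ _ _).symm
      DEq _ _ := .comp_congr
        (alpha_slide .f (boolObj_eq_updF (Function.eq_update_self_iff.2 hi)) (boolObj_eq_updF hX)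
          (fun j => isBase_cond (sx j) (.inl rfl) (.inr rfl)) (fun _ => isBase_boolObj _) _ _ _ _)
        (.refl _)
      DEq _ _ := DEq.comp₃_assoc _ _ _ _
  | betaStep i hi _ _ hY hX =>
    obtain ⟨X, Y, _⟩ := z
    obtain ⟨X', Y', _⟩ := z'
    cases hX
    exact .comp_congr (.refl _) <| .comp_congr (.refl _) <|
      beta_slide .f (boolObj_eq_updF (Function.eq_update_self_iff.2 hi)) (boolObj_eq_updF hY)
        (fun _ => isBase_boolObj _) (fun l => isBase_cond (sz l) (.inr rfl) (.inl rfl)) _ _ _ _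

theorem deq_of_eqvGen_dStep {z z' : MZ Φ Ψ} (h : Relation.EqvGen DStep z z') :
    DEq z.toTerm z'.toTerm := by
  induction h with
  | rel _ _ h => exact h.deq
  | refl z => exact .refl _
  | symm _ _ _ ih => exact ih.symm
  | trans _ _ _ _ _ ih₁ ih₂ => exact ih₁.trans ih₂

end Soundness
section OrderView

variable {m n p gΦ gΨ : ℕ} {sx : Fin m → Bool} {sy : Fin n → Bool} {sz : Fin p → Bool}
variable {Φ : GGraph m n gΦ sx sy} {Ψ : GGraph n p gΨ sy sz}

/-- `x ≤ y` for positive and `y ≤ x` for negative `s`: the condition under which there is a functor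
argument of variance `s` from the object coded by `x` to the one coded by `y`. -/
def SignedLE (s x y : Bool) : Prop := dSrc s x y ≤ dTgt s x y

theorem SignedLE.refl (s x : Bool) : SignedLE s x x := by
  cases s <;> exact le_rfl

theorem SignedLE.trans {s x y z : Bool} (hxy : SignedLE s x y) (hyz : SignedLE s y z) :
    SignedLE s x z := by
  cases s
  exacts [le_trans (α := Bool) hyz hxy, le_trans (α := Bool) hxy hyz]

theorem SignedLE.inf {s x x' y y' : Bool} (h : SignedLE s x y) (h' : SignedLE s x' y') :
    SignedLE s (x ⊓ x') (y ⊓ y') := by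
  cases s
  exacts [inf_le_inf h h', inf_le_inf h h']

theorem signedLE_iff {s x y : Bool} : SignedLE s x y ↔
    (s = true → ¬(x = true ∧ y = false)) ∧ (s = false → ¬(y = true ∧ x = false)) := by
  revert s x y
  unfold SignedLE
  decide

/-- The vectors `(X⃗, Y⃗)` that determine a term of `ℳ₀`, as a point of a Boolean lattice. -/
def MZ.coords (z : MZ Φ Ψ) : (Fin Φ.k → Bool) × (Fin Ψ.k → Bool) := (z.Xv, z.Yv)

theorem MZ.coords_injective : Function.Injective (MZ.coords : MZ Φ Ψ → _) := by
  rintro ⟨X, Y, _⟩ ⟨X', Y', _⟩ h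
  cases h
  rfl

theorem MZ.signedLE (z : MZ Φ Ψ) (j : Fin n) :
    SignedLE (sy j) (z.Xv (Φ.πR j)) (z.Yv (Ψ.πL j)) :=
  signedLE_iff.2 (z.compat j)

/-- The term of `ℳ₀` determined by typable vectors `(X⃗, Y⃗)`. -/
def MZ.ofCoords (s : (Fin Φ.k → Bool) × (Fin Ψ.k → Bool))
    (h : ∀ j, SignedLE (sy j) (s.1 (Φ.πR j)) (s.2 (Ψ.πL j))) : MZ Φ Ψ :=
  ⟨s.1, s.2, fun j => signedLE_iff.1 (h j)⟩

theorem pi_bool_covBy_iff {I : Type*} [DecidableEq I] {a b : I → Bool} :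
    a ⋖ b ↔ ∃ i, b i = true ∧ a = Function.update b i false := by
  rw [Pi.covBy_iff_exists_left_eq]
  simp only [Bool.covBy_iff, Bool.lt_iff]
  grind

theorem dStep_iff_coords_covBy {z z' : MZ Φ Ψ} : DStep z z' ↔ z'.coords ⋖ z.coords := by
  rw [MZ.coords, MZ.coords, Prod.mk_covBy_mk_iff, pi_bool_covBy_iff, pi_bool_covBy_iff]
  constructor
  · rintro (⟨i, hi, _, _, hX, hY⟩ | ⟨i, hi, _, _, hY, hX⟩)
    · exact .inl ⟨⟨i, hi, hX⟩, hY⟩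
    · exact .inr ⟨⟨i, hi, hY⟩, hX⟩
  · rintro (⟨⟨i, hi, hX⟩, hY⟩ | ⟨⟨i, hi, hY⟩, hX⟩)
    · refine .alphaStep z z' i hi (fun j hs hj => ?_) (fun j hs hj => ?_) hX hY
      · simp [MZ.g, hs, hj, hi]
      · have := (z'.compat j).2 hs
        simp_all [MZ.h]
    · refine .betaStep z z' i hi (fun j hs hj => ?_) (fun l hs hl => ?_) hY hX
      · have := (z'.compat j).1 hs
        simp_all [MZ.h]
      · simp [MZ.t, hs, hl, hi]

theorem dStep_diamond (z z₁ z₂ : MZ Φ Ψ) (h₁ : DStep z z₁) (h₂ : DStep z z₂) :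
    ∃ z₃, Relation.ReflGen DStep z₁ z₃ ∧ Relation.ReflTransGen DStep z₂ z₃ := by
  obtain rfl | hne := eq_or_ne z₁ z₂
  · exact ⟨z₁, .refl, .refl⟩
  simp only [dStep_iff_coords_covBy] at *
  have hsup : z₁.coords ⊔ z₂.coords = z.coords :=
    h₁.wcovBy.sup_eq h₂.wcovBy fun h => hne (MZ.coords_injective h)
  let z₃ : MZ Φ Ψ :=
    MZ.ofCoords (z₁.coords ⊓ z₂.coords) fun j => (z₁.signedLE j).inf (z₂.signedLE j)
  have h₁₃ : DStep z₁ z₃ := dStep_iff_coords_covBy.2 <|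
    inf_covBy_of_covBy_sup_right (hsup.symm ▸ h₂)
  have h₂₃ : DStep z₂ z₃ := dStep_iff_coords_covBy.2 <|
    inf_covBy_of_covBy_sup_left (hsup.symm ▸ h₁)
  exact ⟨z₃, .single h₁₃, .single h₂₃⟩

end OrderView
section Model

variable {m n p gΦ gΨ : ℕ} {sx : Fin m → Bool} {sy : Fin n → Bool} {sz : Fin p → Bool}
variable {Φ : GGraph m n gΦ sx sy} {Ψ : GGraph n p gΨ sy sz}

/-- The Boolean code of an object, extending the coding of `A` and `C` to all of `𝒟`. -/
def level : DObj m n p → Bool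
  | .C => true
  | _ => false

theorem level_boolObj (b : Bool) : level (boolObj b : DObj m n p) = b := by
  cases b <;> rfl

theorem level_le_level {X Y : DObj m n p} (g : DTerm Φ Ψ X Y) : level X ≤ level Y := by
  induction g with
  | f => exact Bool.false_le _
  | comp _ _ ih₁ ih₂ => exact ih₁.trans ih₂
  | _ => exact le_rfl

theorem ArgTerm.signedLE_level {s : Bool} {X Y : DObj m n p} (a : ArgTerm Φ Ψ s X Y) :
    SignedLE s (level X) (level Y) := by
  cases s <;> exact level_le_level a

/-- The vectors `X⃗` that can label `α` in a term with target `S(v⃗)`. -/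
def labelsS (Φ : GGraph m n gΦ sx sy) (v : Fin n → DObj m n p) : Set (Fin Φ.k → Bool) :=
  {X | ∀ j, SignedLE (sy j) (X (Φ.πR j)) (level (v j))}

/-- The pairs `(X⃗, Y⃗)` that can label `α` and `β` in a term with target `R(v⃗)`. -/
def labelsR (Φ : GGraph m n gΦ sx sy) (Ψ : GGraph n p gΨ sy sz) (v : Fin p → DObj m n p) :
    Set ((Fin Φ.k → Bool) × (Fin Ψ.k → Bool)) :=
  {s | (∀ j, SignedLE (sy j) (s.1 (Φ.πR j)) (s.2 (Ψ.πL j))) ∧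
    ∀ l, SignedLE (sz l) (s.2 (Ψ.πR l)) (level (v l))}

theorem labelsS_subset {v w : Fin n → DObj m n p} (a : ∀ j, ArgTerm Φ Ψ (sy j) (v j) (w j)) :
    labelsS Φ v ⊆ labelsS Φ w :=
  fun _ hX j => (hX j).trans (a j).signedLE_level

theorem labelsR_subset {v w : Fin p → DObj m n p} (a : ∀ l, ArgTerm Φ Ψ (sz l) (v l) (w l)) :
    labelsR Φ Ψ v ⊆ labelsR Φ Ψ w :=
  fun _ hs => ⟨hs.1, fun l => (hs.2 l).trans (a l).signedLE_level⟩

/-- The set denoted by an object of `𝒟` in the model by components of labels. -/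
def Denotation (Φ : GGraph m n gΦ sx sy) (Ψ : GGraph n p gΨ sy sz) : DObj m n p → Type
  | .S v => CoverComponents (labelsS Φ v)
  | .R v => CoverComponents (labelsR Φ Ψ v)
  | _ => Unit

/-- The function denoted by a morphism term: `α` and `β` record their labels. -/
def DTerm.eval : ∀ {X Y : DObj m n p}, DTerm Φ Ψ X Y → Denotation Φ Ψ X → Denotation Φ Ψ Y
  | _, _, .f => fun _ => ()
  | _, _, .id _ => fun x => x
  | _, _, .comp g h => h.eval ∘ g.eval
  | _, _, .alpha W => fun _ => .mk (fun c => level (W c)) fun _ => .refl _ _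
  | _, _, .beta W => .map (fun X => (X, fun c => level (W c)))
      (fun _ hX => ⟨hX, fun _ => .refl _ _⟩) fun _ _ h => Prod.mk_wcovBy_mk_iff_left.2 h
  | _, _, .mapT _ => fun _ => ()
  | _, _, .mapS a => .inclusion (labelsS_subset a)
  | _, _, .mapR a => .inclusion (labelsR_subset a)

theorem level_updF {k : ℕ} (Z : Fin k → DObj m n p) (i : Fin k) (X : DObj m n p) :
    (fun c => level (updF Z i X c)) = Function.update (fun c => level (Z c)) i (level X) := by
  rw [updF_eq_update]
  exact Function.comp_update level Z i X

theorem level_updF_wcovBy_level_updF {k : ℕ} {X Y : DObj m n p} (t : DTerm Φ Ψ X Y) (i : Fin k)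
    (Z : Fin k → DObj m n p) :
    (fun c => level (updF Z i X c)) ⩿ fun c => level (updF Z i Y c) := by
  have : Nonempty (Fin k) := ⟨i⟩
  rw [level_updF, level_updF, Pi.wcovBy_iff_exists_left_eq]
  refine ⟨i, level X, ?_, (Function.update_idem _ _ _).symm⟩
  rw [Function.update_self]
  exact Bool.wcovBy_iff.2 (level_le_level t)

theorem DEq.eval_eq {X Y : DObj m n p} {g h : DTerm Φ Ψ X Y} (hgh : DEq g h) :
    g.eval = h.eval := by
  induction hgh with
  | symm _ ih => exact ih.symm
  | trans _ _ ih₁ ih₂ => exact ih₁.trans ih₂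
  | comp_congr _ _ ih₁ ih₂ => exact congrArg₂ _ ih₂ ih₁
  | functS | functR | functS_id | functR_id =>
    funext x
    obtain ⟨x⟩ := x
    rfl
  | alphaEq i Z t =>
    funext _
    exact (CoverComponents.mk_eq_mk (level_updF_wcovBy_level_updF t i Z)).symm
  | betaEq i Z t =>
    funext x
    obtain ⟨x⟩ := x
    exact (CoverComponents.mk_eq_mk
      (Prod.mk_wcovBy_mk_iff_right.2 (level_updF_wcovBy_level_updF t i Z))).symm
  | _ => rfl

theorem quot_mk_eq_of_coords_wcovBy {z z' : MZ Φ Ψ} (h : z.coords ⩿ z'.coords) :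
    Quot.mk DStep z = Quot.mk DStep z' := by
  obtain h | h := h.covBy_or_eq
  · exact (Quot.sound (dStep_iff_coords_covBy.2 h)).symm
  · rw [MZ.coords_injective h]

/-- The class of terms of `ℳ₀` modulo `D` reduction that corresponds to a component of labels. -/
def dClass : Denotation Φ Ψ (RCA sz) → Quot (DStep (Φ := Φ) (Ψ := Ψ)) :=
  Quot.lift (fun s => Quot.mk _ (MZ.ofCoords s.1 s.2.1)) fun _ _ h => quot_mk_eq_of_coords_wcovBy h

theorem dClass_eval_toTerm (z : MZ Φ Ψ) : dClass (z.toTerm.eval ()) = Quot.mk DStep z := by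
  refine congrArg (Quot.mk DStep) (MZ.coords_injective ?_)
  exact Prod.ext (funext fun _ => level_boolObj _) (funext fun _ => level_boolObj _)

theorem deq_toTerm_iff_eqvGen {z z' : MZ Φ Ψ} :
    DEq z.toTerm z'.toTerm ↔ Relation.EqvGen DStep z z' := by
  refine ⟨fun h => Quot.eqvGen_exact ?_, deq_of_eqvGen_dStep⟩
  rw [← dClass_eval_toTerm, h.eval_eq, dClass_eval_toTerm]

end Model

/-- Theorem 2.1 of the paper.  Equality in `ℳ` is decidable: for
all morphism terms `g₁`, `g₂` in `ℳ`, the equation `g₁ = g₂` is derivable from the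
`𝒦_{Φ,Ψ}`-equations if and only if `D(CF(g₁)) ≡ D(CF(g₂))`, where `CF(g)` is the
(unique) `CF` normal form of `g` and `D(h)` the (unique) `D` normal form of `h`.
(The right-hand side is manifestly decidable, both normal forms being effectively
computable; here `CF(gₐ)` is represented by a term `zₐ` of `ℳ₀` and `D(zₐ)` by its
`D` normal form `wₐ`.) -/
theorem M_eq_decidable
    {m n p gΦ gΨ : ℕ} {sx : Fin m → Bool} {sy : Fin n → Bool} {sz : Fin p → Bool}
    {Φ : GGraph m n gΦ sx sy} {Ψ : GGraph n p gΨ sy sz}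
    (g₁ g₂ : DTerm Φ Ψ (TAC sx) (RCA sz)) (h₁ : InM g₁) (h₂ : InM g₂)
    (z₁ z₂ : MZ Φ Ψ) (hz₁ : ReprCF g₁ z₁) (hz₂ : ReprCF g₂ z₂)
    (w₁ w₂ : MZ Φ Ψ)
    (hw₁ : Relation.ReflTransGen DStep z₁ w₁) (hn₁ : DNormal w₁)
    (hw₂ : Relation.ReflTransGen DStep z₂ w₂) (hn₂ : DNormal w₂) :
    DEq g₁ g₂ ↔ w₁ = w₂ := by
  calc
    DEq g₁ g₂ ↔ DEq z₁.toTerm z₂.toTerm :=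
      ⟨fun h => hz₁.deq.symm.trans (h.trans hz₂.deq), fun h => hz₁.deq.trans (h.trans hz₂.deq.symm)⟩
    _ ↔ Relation.EqvGen DStep z₁ z₂ := deq_toTerm_iff_eqvGen
    _ ↔ w₁ = w₂ := eqvGen_iff_eq_of_normal dStep_diamond hw₁ hn₁ hw₂ hn₂

end GDin
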